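/- Let Γ be a finite connected k-regular simple graph (k ≥ 2) of diameter at most d, with adjacency matrix A over ℝ. Define matrices by the recursion G_{k,0}(A) = I, G_{k,1}(A) = A + I, G_{k,i+1}(A) = A·G_{k,i}(A) − (k−1)·G_{k,i−1}(A). Then every entry of G_{k,d}(A) is at least 1; equivalently, G_{k,d}(A) = J_n + B where J_n is the all-ones matrix and B is a matrix with nonnegative entries. -/

import Mathlib

/-- The matrix polynomials `G_{k,i}(A)` defined by `G_{k,0}(A) = I`, `G_{k,1}(A) = A + I`,
`G_{k,i+1}(A) = A·G_{k,i}(A) − (k−1)·G_{k,i−1}(A)`. -/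
def Gmat {V : Type*} [Fintype V] [DecidableEq V] (k : ℕ) (A : Matrix V V ℝ) :
    ℕ → Matrix V V ℝ
  | 0 => 1
  | 1 => A + 1
  | (i + 2) => A * Gmat k A (i + 1) - ((k : ℝ) - 1) • Gmat k A i

/-!
The entry of `G_{k,n}(A)` at `(u, v)` counts the non-backtracking walks of length at most `n` from
`u` to `v`, and a path is a non-backtracking walk. For the count, let `S` and `T` be the incidence
matrices between vertices and the darts leaving, respectively entering, them, `P` the reversal of
darts and `B` the Hashimoto matrix. Non-backtracking walks of length `n + 1` are counted by
`S * B ^ n * T`, and their recurrence follows from `S * T = A`, `T * S = B + P`, `P * T = Sᵀ`,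
`P * P = 1` and the fact that `S * Sᵀ` is the degree matrix.
-/

open Finset Matrix

section EntrywiseOrder

variable {l m n R : Type*} [Fintype m] [Semiring R] [PartialOrder R] [IsOrderedRing R]
  {M : Matrix l m R} {N : Matrix m n R}

theorem matrix_mul_apply_nonneg (hM : ∀ i j, 0 ≤ M i j) (hN : ∀ i j, 0 ≤ N i j) (i : l) (j : n) :
    0 ≤ (M * N) i j :=
  sum_nonneg fun x _ => mul_nonneg (hM i x) (hN x j)

theorem one_le_matrix_mul_apply (hM : ∀ i j, 0 ≤ M i j) (hN : ∀ i j, 0 ≤ N i j) {i : l} {x : m}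
    {j : n} (hix : 1 ≤ M i x) (hxj : 1 ≤ N x j) : 1 ≤ (M * N) i j :=
  calc
    1 ≤ M i x * N x j := one_le_mul_of_one_le_of_one_le hix hxj
    _ ≤ (M * N) i j := single_le_sum (f := fun y => M i y * N y j)
      (fun y _ => mul_nonneg (hM i y) (hN y j)) (mem_univ x)

end EntrywiseOrder

section Definitions

variable {V : Type*} [DecidableEq V] (G : SimpleGraph V) (R : Type*) [Zero R] [One R]

/-- The incidence matrix `S` between vertices and the darts leaving them. -/
def dartSourceMatrix : Matrix V G.Dart R :=
  of fun u d => if d.fst = u then 1 else 0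

/-- The incidence matrix `T` between darts and the vertices they enter. -/
def dartTargetMatrix : Matrix G.Dart V R :=
  of fun d v => if d.snd = v then 1 else 0

/-- The permutation matrix `P` of the reversal of darts. -/
def dartReversalMatrix : Matrix G.Dart G.Dart R :=
  of fun d e => if e = d.symm then 1 else 0

/-- The Hashimoto (non-backtracking) matrix `B`, whose powers count non-backtracking walks between
darts: it relates a dart to the darts that continue it other than its reversal. -/
def hashimotoMatrix : Matrix G.Dart G.Dart R :=
  of fun d e => if d.snd = e.fst ∧ e ≠ d.symm then 1 else 0

end Definitions

section Semiring

variable {V : Type*} [Fintype V] [DecidableEq V] (G : SimpleGraph V) (R : Type*) [Semiring R]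

theorem dartTargetMatrix_mul_dartSourceMatrix :
    dartTargetMatrix G R * dartSourceMatrix G R = hashimotoMatrix G R + dartReversalMatrix G R := by
  ext d e
  by_cases he : e = d.symm <;>
    simp [mul_apply, dartTargetMatrix, dartSourceMatrix, hashimotoMatrix, dartReversalMatrix, he,
      eq_comm]

variable [DecidableRel G.Adj]

/-- The matrix whose `(u, v)` entry is the number of non-backtracking walks of length `n` from `u`
to `v`. A walk of length `n + 1` is encoded by its `n + 1` darts, hence by `n` steps of the
Hashimoto matrix. -/
def nonBacktrackingWalkMatrix : ℕ → Matrix V V R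
  | 0 => 1
  | n + 1 => dartSourceMatrix G R * (hashimotoMatrix G R ^ n * dartTargetMatrix G R)

theorem dartSourceMatrix_mul_dartTargetMatrix :
    dartSourceMatrix G R * dartTargetMatrix G R = G.adjMatrix R := by
  ext u v
  simp only [mul_apply, dartSourceMatrix, dartTargetMatrix, of_apply, ite_zero_mul_ite_zero,
    mul_one, SimpleGraph.adjMatrix_apply]
  by_cases huv : G.Adj u v
  · rw [if_pos huv, sum_eq_single_of_mem (⟨(u, v), huv⟩ : G.Dart) (mem_univ _), if_pos ⟨rfl, rfl⟩]
    refine fun d _ hd => if_neg ?_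
    rintro ⟨rfl, rfl⟩
    exact hd rfl
  · rw [if_neg huv]
    refine sum_eq_zero fun d _ => if_neg ?_
    rintro ⟨rfl, rfl⟩
    exact huv d.adj

theorem dartReversalMatrix_mul_apply {n : Type*} (M : Matrix G.Dart n R) (d : G.Dart) (j : n) :
    (dartReversalMatrix G R * M) d j = M d.symm j := by
  simp [mul_apply, dartReversalMatrix]

theorem dartReversalMatrix_mul_dartTargetMatrix :
    dartReversalMatrix G R * dartTargetMatrix G R = (dartSourceMatrix G R)ᵀ := by
  ext d v
  simp [dartReversalMatrix_mul_apply, dartTargetMatrix, dartSourceMatrix]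

theorem dartReversalMatrix_mul_self : dartReversalMatrix G R * dartReversalMatrix G R = 1 := by
  ext d e
  rw [dartReversalMatrix_mul_apply]
  simp [dartReversalMatrix, one_apply, eq_comm]

theorem dartSourceMatrix_mul_transpose :
    dartSourceMatrix G R * (dartSourceMatrix G R)ᵀ = G.degMatrix R := by
  ext u v
  simp only [mul_apply, transpose_apply, dartSourceMatrix, of_apply, ite_zero_mul_ite_zero, mul_one,
    SimpleGraph.degMatrix, diagonal_apply]
  split_ifs with huv
  · simp [← huv, G.dart_fst_fiber_card_eq_degree]
  · refine sum_eq_zero fun d _ => if_neg ?_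
    rintro ⟨rfl, rfl⟩
    exact huv rfl

theorem nonBacktrackingWalkMatrix_one : nonBacktrackingWalkMatrix G R 1 = G.adjMatrix R := by
  simp [nonBacktrackingWalkMatrix, dartSourceMatrix_mul_dartTargetMatrix]

theorem adjMatrix_mul_dartSourceMatrix :
    G.adjMatrix R * dartSourceMatrix G R =
      dartSourceMatrix G R * (hashimotoMatrix G R + dartReversalMatrix G R) := by
  rw [← dartSourceMatrix_mul_dartTargetMatrix, Matrix.mul_assoc,
    dartTargetMatrix_mul_dartSourceMatrix]

theorem adjMatrix_mul_nonBacktrackingWalkMatrix_one :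
    G.adjMatrix R * nonBacktrackingWalkMatrix G R 1 =
      nonBacktrackingWalkMatrix G R 2 + G.degMatrix R := by
  simp only [nonBacktrackingWalkMatrix, pow_zero, pow_one, Matrix.one_mul]
  rw [← Matrix.mul_assoc, adjMatrix_mul_dartSourceMatrix, Matrix.mul_assoc, Matrix.add_mul,
    Matrix.mul_add, dartReversalMatrix_mul_dartTargetMatrix, dartSourceMatrix_mul_transpose]

end Semiring

section Ring

variable {V : Type*} [Fintype V] [DecidableEq V] (G : SimpleGraph V) [DecidableRel G.Adj]
  (R : Type*) [Ring R]

theorem dartReversalMatrix_mul_hashimotoMatrix :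
    dartReversalMatrix G R * hashimotoMatrix G R =
      (dartSourceMatrix G R)ᵀ * dartSourceMatrix G R - 1 := by
  rw [← dartReversalMatrix_mul_dartTargetMatrix, Matrix.mul_assoc,
    dartTargetMatrix_mul_dartSourceMatrix, Matrix.mul_add, dartReversalMatrix_mul_self,
    add_sub_cancel_right]

theorem adjMatrix_mul_nonBacktrackingWalkMatrix (n : ℕ) :
    G.adjMatrix R * nonBacktrackingWalkMatrix G R (n + 2) =
      nonBacktrackingWalkMatrix G R (n + 3) +
        (G.degMatrix R - 1) * nonBacktrackingWalkMatrix G R (n + 1) := by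
  simp only [nonBacktrackingWalkMatrix]
  set S := dartSourceMatrix G R
  set P := dartReversalMatrix G R
  set B := hashimotoMatrix G R
  set X := B ^ n * dartTargetMatrix G R
  have hPB : S * (P * B) = (G.degMatrix R - 1) * S := by
    rw [dartReversalMatrix_mul_hashimotoMatrix, Matrix.mul_sub, ← Matrix.mul_assoc,
      dartSourceMatrix_mul_transpose, Matrix.mul_one, Matrix.sub_mul, Matrix.one_mul]
  calc
    G.adjMatrix R * (S * (B ^ (n + 1) * dartTargetMatrix G R)) = S * (B + P) * (B * X) := by
      rw [← Matrix.mul_assoc, adjMatrix_mul_dartSourceMatrix, pow_succ', Matrix.mul_assoc B]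
    _ = S * (B * (B * X)) + S * (P * B) * X := by
      simp only [Matrix.mul_add, Matrix.add_mul, Matrix.mul_assoc]
    _ = S * (B ^ (n + 2) * dartTargetMatrix G R) + (G.degMatrix R - 1) * (S * X) := by
      rw [hPB, pow_succ', pow_succ']
      simp only [X, Matrix.mul_assoc]

theorem adjMatrix_mul_sum_nonBacktrackingWalkMatrix (n : ℕ) :
    G.adjMatrix R * ∑ i ∈ range (n + 2), nonBacktrackingWalkMatrix G R i =
      ∑ i ∈ range (n + 3), nonBacktrackingWalkMatrix G R i +
        (G.degMatrix R - 1) * ∑ i ∈ range (n + 1), nonBacktrackingWalkMatrix G R i := by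
  induction n with
  | zero =>
    have hzero : nonBacktrackingWalkMatrix G R 0 = 1 := rfl
    simp only [sum_range_succ, range_zero, sum_empty, zero_add, mul_add, hzero, mul_one,
      adjMatrix_mul_nonBacktrackingWalkMatrix_one]
    rw [nonBacktrackingWalkMatrix_one]
    abel
  | succ n ih =>
    rw [sum_range_succ _ (n + 2), mul_add, ih, adjMatrix_mul_nonBacktrackingWalkMatrix,
      sum_range_succ _ (n + 3), sum_range_succ _ (n + 1), mul_add]
    abel

end Ring

section OrderedSemiring

variable {V : Type*} [DecidableEq V] {G : SimpleGraph V}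
  (R : Type*) [Semiring R] [PartialOrder R] [IsOrderedRing R]

theorem dartSourceMatrix_apply_nonneg (u : V) (d : G.Dart) : 0 ≤ dartSourceMatrix G R u d :=
  ite_nonneg zero_le_one le_rfl

theorem hashimotoMatrix_apply_nonneg (d e : G.Dart) : 0 ≤ hashimotoMatrix G R d e :=
  ite_nonneg zero_le_one le_rfl

variable [Fintype V] [DecidableRel G.Adj]

theorem hashimotoMatrix_pow_mul_dartTargetMatrix_apply_nonneg (n : ℕ) (d : G.Dart) (v : V) :
    0 ≤ (hashimotoMatrix G R ^ n * dartTargetMatrix G R) d v :=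
  matrix_mul_apply_nonneg (pow_apply_nonneg (hashimotoMatrix_apply_nonneg R) n)
    (fun _ _ => ite_nonneg zero_le_one le_rfl) d v

theorem nonBacktrackingWalkMatrix_apply_nonneg (n : ℕ) (u v : V) :
    0 ≤ nonBacktrackingWalkMatrix G R n u v := by
  cases n with
  | zero => exact ite_nonneg zero_le_one le_rfl
  | succ n =>
    exact matrix_mul_apply_nonneg (dartSourceMatrix_apply_nonneg R)
      (hashimotoMatrix_pow_mul_dartTargetMatrix_apply_nonneg R n) u v

theorem one_le_hashimotoMatrix_pow_mul_dartTargetMatrix_apply {u w v : V} (huw : G.Adj u w)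
    {p : G.Walk w v} (hp : (p.cons huw).IsPath) :
    1 ≤ (hashimotoMatrix G R ^ p.length * dartTargetMatrix G R) ⟨(u, w), huw⟩ v := by
  induction p generalizing u with
  | nil => simp [dartTargetMatrix]
  | @cons w x v hwx q ih =>
    obtain ⟨hq, hu⟩ := (SimpleGraph.Walk.cons_isPath_iff _ _).mp hp
    have hxu : x ≠ u := by
      rintro rfl
      simp at hu
    rw [SimpleGraph.Walk.length_cons, pow_succ', Matrix.mul_assoc]
    refine one_le_matrix_mul_apply (hashimotoMatrix_apply_nonneg R)
      (hashimotoMatrix_pow_mul_dartTargetMatrix_apply_nonneg R _) ?_ (ih hwx hq)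
    simp [hashimotoMatrix, SimpleGraph.Dart.symm, hxu]

theorem one_le_nonBacktrackingWalkMatrix_apply_of_isPath {u v : V} {p : G.Walk u v}
    (hp : p.IsPath) : 1 ≤ nonBacktrackingWalkMatrix G R p.length u v := by
  cases p with
  | nil => simp [nonBacktrackingWalkMatrix]
  | cons huw q =>
    exact one_le_matrix_mul_apply (dartSourceMatrix_apply_nonneg R)
      (hashimotoMatrix_pow_mul_dartTargetMatrix_apply_nonneg R _) (by simp [dartSourceMatrix])
      (one_le_hashimotoMatrix_pow_mul_dartTargetMatrix_apply R huw hp)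

end OrderedSemiring

section Regular

variable {V : Type*} [Fintype V] [DecidableEq V] {G : SimpleGraph V} [DecidableRel G.Adj] {k : ℕ}

theorem Gmat_adjMatrix_eq_sum_nonBacktrackingWalkMatrix (hreg : G.IsRegularOfDegree k) (n : ℕ) :
    Gmat k (G.adjMatrix ℝ) n = ∑ i ∈ range (n + 1), nonBacktrackingWalkMatrix G ℝ i := by
  have hdeg : G.degMatrix ℝ - 1 = ((k : ℝ) - 1) • (1 : Matrix V V ℝ) := by
    simp only [SimpleGraph.degMatrix, hreg.degree_eq, sub_smul, one_smul, smul_one_eq_diagonal]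
  induction n using Nat.twoStepInduction with
  | zero => simp [Gmat, nonBacktrackingWalkMatrix]
  | one =>
    rw [sum_range_succ, sum_range_one, nonBacktrackingWalkMatrix_one, add_comm]
    rfl
  | more n ih₀ ih₁ =>
    rw [Gmat, ih₀, ih₁, adjMatrix_mul_sum_nonBacktrackingWalkMatrix, hdeg, smul_one_mul,
      add_sub_cancel_right]

theorem stmt_7_general (hreg : G.IsRegularOfDegree k) {d : ℕ} {u v : V} (p : G.Walk u v)
    (hp : p.length ≤ d) : 1 ≤ Gmat k (G.adjMatrix ℝ) d u v := by
  have hlength : p.bypass.length ∈ range (d + 1) :=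
    mem_range_succ_iff.mpr (p.length_bypass_le_length.trans hp)
  rw [Gmat_adjMatrix_eq_sum_nonBacktrackingWalkMatrix hreg, Matrix.sum_apply]
  calc
    1 ≤ nonBacktrackingWalkMatrix G ℝ p.bypass.length u v :=
      one_le_nonBacktrackingWalkMatrix_apply_of_isPath ℝ p.bypass_isPath
    _ ≤ ∑ i ∈ range (d + 1), nonBacktrackingWalkMatrix G ℝ i u v :=
      single_le_sum (f := fun i => nonBacktrackingWalkMatrix G ℝ i u v)
        (fun i _ => nonBacktrackingWalkMatrix_apply_nonneg ℝ i u v) hlength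

end Regular

/-- For a finite connected `k`-regular graph (`k ≥ 2`) of diameter at most `d`, every
entry of `G_{k,d}(A)` is at least `1`, where `A` is the adjacency matrix. -/
theorem stmt_7 (k d : ℕ) (hk : 2 ≤ k)
    (V : Type*) [Fintype V] [DecidableEq V] (G : SimpleGraph V) [DecidableRel G.Adj]
    (hconn : G.Connected) (hreg : G.IsRegularOfDegree k)
    (hdiam : ∀ u v : V, G.dist u v ≤ d) :
    ∀ i j : V, 1 ≤ Gmat k (SimpleGraph.adjMatrix ℝ G) d i j := by
  intro i j
  obtain ⟨p, hp⟩ := hconn.exists_walk_length_eq_dist i j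
  exact stmt_7_general hreg p (hp.trans_le (hdiam i j))
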